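/- arXiv:1601.02432 — 3 statements merged into one kernel-verified Lean document; each statement's English description precedes it below -/
import Mathlib

section
/- If (X,d,φ) is a Smale space, then X has finite covering dimension, i.e. there exists d ∈ ℕ such that X has covering dimension at most d. -/
/-!
A Smale space is expansive: if the orbits of `x` and `y` stay `c`-close for all integer times, then
`[x, y]` lies on the local stable set of `x`, and this persists along the backward orbit, so
contraction forces `[x, y] = x`; the symmetric argument along the forward orbit gives `x = y`
(`SmaleSpace.expansive`).

An expansive homeomorphism `f` of a compact metric space forces finite covering dimension
(Mañé; `covDimLE_of_expansive`). Let `d_n(x, y) = max_{|i| ≤ n} d(fⁱ x, fⁱ y)`, let `r = c / 2`, and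
cover `X` by the `d_n`-balls of radius `r` around a maximal `(d_n, r)`-separated set. By uniform
expansiveness (`uniform_expansive`) the mesh of these covers tends to `0` with `n`. Two centres
whose balls share a point are `c`-close at all times `|i| ≤ n`, hence `r`-close at all times
`|i| ≤ n - N` with `N` independent of `n`. Their separation thus occurs within `N` steps of time
`n` or `-n`, so the centres are distinguished by which cells of a fixed finite partition contain
`fⁿ x` and `f⁻ⁿ x`. The multiplicity is therefore at most the square of the number of cells.
-/

open Filter Topology Set

/-- A Smale space: a compact metric space `X` with a homeomorphism `phi`, constants
`eps > 0`, `0 < lam < 1`, and a (globally defined) bracket map `br`, whose axioms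
B1--B4, C1, C2 are only required when all brackets occurring are defined, i.e. when the
relevant pairs of points are at distance `< eps`. -/
structure SmaleSpace (X : Type*) [MetricSpace X] [CompactSpace X] where
  phi : X ≃ₜ X
  eps : ℝ
  lam : ℝ
  eps_pos : 0 < eps
  lam_pos : 0 < lam
  lam_lt_one : lam < 1
  br : X → X → X
  br_continuousOn : ContinuousOn (fun p : X × X => br p.1 p.2) {p : X × X | dist p.1 p.2 < eps}
  br_self : ∀ x : X, br x x = x
  br_b2 : ∀ x y z : X, dist y z < eps → dist x (br y z) < eps → dist x z < eps →
    br x (br y z) = br x z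
  br_b3 : ∀ x y z : X, dist x y < eps → dist (br x y) z < eps → dist x z < eps →
    br (br x y) z = br x z
  br_b4 : ∀ x y : X, dist x y < eps → dist (phi x) (phi y) < eps →
    phi (br x y) = br (phi x) (phi y)
  c1 : ∀ x y : X, dist x y < eps → br x y = y → dist (phi x) (phi y) ≤ lam * dist x y
  c2 : ∀ x y : X, dist x y < eps → br x y = x →
    dist (phi.symm x) (phi.symm y) ≤ lam * dist x y

namespace SmaleSpace

variable {X : Type*} [MetricSpace X] [CompactSpace X] (S : SmaleSpace X)

/-- The local stable set `X^s(x, ε)`. -/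
def Xs (x : X) (ε : ℝ) : Set X := {y | dist x y < ε ∧ S.br y x = x}

/-- The local unstable set `X^u(x, ε)`. -/
def Xu (x : X) (ε : ℝ) : Set X := {y | dist x y < ε ∧ S.br x y = x}

/-- Stable equivalence: `d(φⁿ x, φⁿ y) → 0` as `n → +∞`. -/
def StablyEquiv (x y : X) : Prop :=
  Tendsto (fun n : ℕ => dist ((⇑S.phi)^[n] x) ((⇑S.phi)^[n] y)) atTop (𝓝 0)

/-- Unstable equivalence: `d(φⁿ x, φⁿ y) → 0` as `n → -∞`. -/
def UnstablyEquiv (x y : X) : Prop :=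
  Tendsto (fun n : ℕ => dist ((⇑S.phi.symm)^[n] x) ((⇑S.phi.symm)^[n] y)) atTop (𝓝 0)

/-- A periodic point. -/
def IsPeriodicPt (x : X) : Prop := ∃ n : ℕ, 0 < n ∧ (⇑S.phi)^[n] x = x

/-- Irreducibility of the dynamical system `(X, φ)`. -/
def Irreducible : Prop :=
  ∀ U V : Set X, IsOpen U → IsOpen V → U.Nonempty → V.Nonempty →
    ∃ n : ℕ, 0 < n ∧ ((⇑S.phi)^[n] '' U ∩ V).Nonempty

/-- `X^u(P)`: points unstably equivalent to some point of `P`. -/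
def XuP (P : Set X) : Set X := {y | ∃ p ∈ P, S.UnstablyEquiv y p}

/-- The stable groupoid `G_S(P)` as a set of pairs. -/
def GS (P : Set X) : Set (X × X) :=
  {q | S.StablyEquiv q.1 q.2 ∧ q.1 ∈ S.XuP P ∧ q.2 ∈ S.XuP P}

/-- The map `h(z) = φ^{-N}([φ^N z, φ^N v])`. -/
def hMap (v : X) (N : ℕ) (z : X) : X :=
  (⇑S.phi.symm)^[N] (S.br ((⇑S.phi)^[N] z) ((⇑S.phi)^[N] v))

/-- The basic set `V(v, w, h, δ, N) = {(h z, z) : z ∈ X^u(w, δ)}`. -/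
def basicSet (v w : X) (δ : ℝ) (N : ℕ) : Set (X × X) :=
  {q | ∃ z ∈ S.Xu w δ, q = (S.hMap v N z, z)}

/-- The conditions on the data `(v, w, δ, N)` of a basic set for `G_S(P)`. -/
def IsBasicData (P : Set X) (v w : X) (δ : ℝ) (N : ℕ) : Prop :=
  (v, w) ∈ S.GS P ∧ dist ((⇑S.phi)^[N] v) ((⇑S.phi)^[N] w) < S.eps / 2 ∧
  0 < δ ∧ δ < S.eps / 2 ∧
  (∀ n ≤ N, (⇑S.phi)^[n] '' S.Xu w δ ⊆ S.Xu ((⇑S.phi)^[n] w) (S.eps / 2)) ∧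
  (∀ n ≤ N, (⇑S.phi)^[n] '' S.Xu v δ ⊆ S.Xu ((⇑S.phi)^[n] v) (S.eps / 2))

/-- The stable groupoid `G_S(P)` as a type. -/
abbrev GSPt (P : Set X) : Type _ := {q : X × X // q ∈ S.GS P}

/-- The topology on `G_S(P)` generated by the basic sets. -/
def gsTop (P : Set X) : TopologicalSpace (S.GSPt P) :=
  TopologicalSpace.generateFrom
    {U : Set (S.GSPt P) | ∃ v w δ N, S.IsBasicData P v w δ N ∧
      U = {q : S.GSPt P | q.val ∈ S.basicSet v w δ N}}

/-- A subset `A` of `G_S(P)` is open for the topology generated by the basic sets. -/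
def gsOpen (P : Set X) (A : Set (X × X)) : Prop :=
  @IsOpen _ (S.gsTop P) {q : S.GSPt P | q.val ∈ A}

/-- A subset `A` of `G_S(P)` is relatively compact: its closure in `G_S(P)` is compact. -/
def gsRelCompact (P : Set X) (A : Set (X × X)) : Prop :=
  @IsCompact _ (S.gsTop P) (@closure _ (S.gsTop P) {q : S.GSPt P | q.val ∈ A})

/-- A subset `U` of the unit space `X^u(P)` is open, for the subspace topology induced
via the unit embedding `x ↦ (x, x)`. -/
def gsUnitOpen (P : Set X) (U : Set X) : Prop :=
  U ⊆ S.XuP P ∧ ∃ W : Set (X × X), S.gsOpen P W ∧ ∀ x ∈ S.XuP P, (x ∈ U ↔ (x, x) ∈ W)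

/-- Image of a set of pairs under `φ^N × φ^N`. -/
def phiSq (N : ℕ) (A : Set (X × X)) : Set (X × X) :=
  (fun q : X × X => ((⇑S.phi)^[N] q.1, (⇑S.phi)^[N] q.2)) '' A

/-- `{(x, y) ∈ A : x, y ∈ U}`. -/
def restrictTo (A : Set (X × X)) (U : Set X) : Set (X × X) :=
  {q ∈ A | q.1 ∈ U ∧ q.2 ∈ U}

/-- `U(w, γ)`: the image of `X^u(w, γ) × X^s(w, γ)` under the bracket map. -/
def Uset (w : X) (γ : ℝ) : Set X :=
  {u | ∃ z ∈ S.Xu w γ, ∃ z' ∈ S.Xs w γ, u = S.br z z'}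

end SmaleSpace

/-- The subgroupoid of a pair groupoid generated by a set `A` of pairs: the smallest
collection of pairs containing `A` and closed under inverses and composition. -/
inductive GenGroupoid {X : Type*} (A : Set (X × X)) : X × X → Prop
  | base (q : X × X) (hq : q ∈ A) : GenGroupoid A q
  | inv (x y : X) (h : GenGroupoid A (x, y)) : GenGroupoid A (y, x)
  | comp (x y z : X) (h1 : GenGroupoid A (x, y)) (h2 : GenGroupoid A (y, z)) :
      GenGroupoid A (x, z)

/-- The subgroupoid generated by `A`, as a set of pairs. -/
def genSet {X : Type*} (A : Set (X × X)) : Set (X × X) := {q | GenGroupoid A q}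

/-- `Y` has covering dimension at most `d`: every finite open cover admits a finite
open refinement in which every point belongs to at most `d + 1` members. -/
def CovDimLE (Y : Type*) [TopologicalSpace Y] (d : ℕ) : Prop :=
  ∀ (n : ℕ) (U : Fin n → Set Y), (∀ i, IsOpen (U i)) → (⋃ i, U i) = Set.univ →
    ∃ (m : ℕ) (V : Fin m → Set Y), (∀ k, IsOpen (V k)) ∧ (⋃ k, V k) = Set.univ ∧
      (∀ k, ∃ i, V k ⊆ U i) ∧ ∀ y : Y, Set.ncard {k | y ∈ V k} ≤ d + 1

/-! ### Expansiveness of Smale spaces -/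

namespace SmaleSpace

variable {X : Type*} [MetricSpace X] [CompactSpace X] (S : SmaleSpace X)

/-- Points close enough to each other are close to their bracket, since `[x, x] = x` and the
bracket is continuous near the (compact) diagonal. -/
lemma exists_bracket_close : ∃ c > 0, c < S.eps ∧
    ∀ x y : X, dist x y ≤ c → dist x (S.br x y) < S.eps := by
  have hopen : IsOpen {p : X × X | dist p.1 p.2 < S.eps} :=
    isOpen_lt (by fun_prop) continuous_const
  have hmem : {p : X × X | dist p.1 (S.br p.1 p.2) < S.eps} ∈ 𝓝ˢ (Set.diagonal X) := by
    rw [mem_nhdsSet_iff_forall]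
    rintro ⟨x, y⟩ hxy
    obtain rfl : x = y := hxy
    have hcont : ContinuousAt (fun p : X × X => S.br p.1 p.2) (x, x) :=
      S.br_continuousOn.continuousAt (hopen.mem_nhds (by simp [S.eps_pos]))
    have hdist : ContinuousAt (fun p : X × X => dist p.1 (S.br p.1 p.2)) (x, x) :=
      continuousAt_fst.dist hcont
    exact hdist.eventually_lt_const (by simpa [S.br_self] using S.eps_pos)
  rw [nhdsSet_diagonal_eq_uniformity, Metric.mem_uniformity_dist] at hmem
  obtain ⟨δ, hδ, h⟩ := hmem
  have heps := S.eps_pos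
  refine ⟨min δ S.eps / 2, by positivity, ?_, fun x y hxy => h ?_⟩
  · linarith [min_le_right δ S.eps]
  · have : 0 < min δ S.eps := lt_min hδ heps
    linarith [min_le_left δ S.eps]

/-- Every Smale space is expansive. -/
theorem expansive : ∃ c > 0, ∀ x y : X,
    (∀ i : ℤ, dist ((S.phi ^ i) x) ((S.phi ^ i) y) ≤ c) → x = y := by
  obtain ⟨c, hc, hce, hbr⟩ := S.exists_bracket_close
  refine ⟨c, hc, ?_⟩
  set R : X → X → Prop := fun x y => ∀ i : ℤ, dist ((S.phi ^ i) x) ((S.phi ^ i) y) ≤ c with hR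
  have R0 : ∀ x y, R x y → dist x y ≤ c := fun x y h => by simpa using h 0
  have Rf : ∀ x y, R x y → R (S.phi x) (S.phi y) := fun x y h i => by
    simpa [zpow_add] using h (i + 1)
  have Rb : ∀ x y, R x y → R (S.phi.symm x) (S.phi.symm y) := fun x y h i => by
    have := h (i - 1)
    rw [zpow_sub_one] at this
    exact this
  have hlim : Tendsto (fun k : ℕ => S.lam ^ k * S.eps) atTop (𝓝 0) := by
    simpa using (tendsto_pow_atTop_nhds_zero_of_lt_one S.lam_pos.le S.lam_lt_one).mul_const S.eps
  -- `[x, y]` is on the local stable set of `x`, all along the backward orbit.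
  have stable : ∀ k : ℕ, ∀ x y, R x y → dist x (S.br x y) ≤ S.lam ^ k * S.eps := by
    intro k
    induction k with
    | zero => intro x y h; simpa using (hbr x y (R0 x y h)).le
    | succ k ih =>
      intro x y h
      have h' := Rb x y h
      have hd := R0 _ _ h'
      have hd2 := hbr _ _ hd
      have hfix := S.br_b2 (S.phi.symm x) (S.phi.symm x) (S.phi.symm y)
        (hd.trans_lt hce) hd2 (hd.trans_lt hce)
      have hcon := S.c1 _ _ hd2 hfix
      rw [S.br_b4 _ _ (hd.trans_lt hce) (by simpa using (R0 x y h).trans_lt hce)] at hcon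
      simp only [Homeomorph.apply_symm_apply] at hcon
      calc _ ≤ _ := hcon
        _ ≤ S.lam * (S.lam ^ k * S.eps) := mul_le_mul_of_nonneg_left (ih _ _ h') S.lam_pos.le
        _ = _ := by ring
  have hbrx : ∀ x y, R x y → S.br x y = x := fun x y h =>
    (dist_le_zero.1 (ge_of_tendsto' hlim fun k => stable k x y h)).symm
  -- Now `[x, y] = x` puts `y` on the local unstable set of `x`, all along the forward orbit.
  have unstable : ∀ k : ℕ, ∀ x y, R x y → dist x y ≤ S.lam ^ k * S.eps := by
    intro k
    induction k with
    | zero => intro x y h; simpa using (R0 x y h).trans hce.le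
    | succ k ih =>
      intro x y h
      have h' := Rf x y h
      have hcon := S.c2 _ _ ((R0 _ _ h').trans_lt hce) (hbrx _ _ h')
      simp only [Homeomorph.symm_apply_apply] at hcon
      calc _ ≤ _ := hcon
        _ ≤ S.lam * (S.lam ^ k * S.eps) := mul_le_mul_of_nonneg_left (ih _ _ h') S.lam_pos.le
        _ = _ := by ring
  exact fun x y h => dist_le_zero.1 (ge_of_tendsto' hlim fun k => unstable k x y h)

end SmaleSpace

/-! ### Finite dimensionality from expansiveness -/

section Expansive

variable {X : Type*} [MetricSpace X] (f : X ≃ₜ X)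

/-- `d_n(x, y) < r` for the Bowen metric `d_n(x, y) = max_{|i| ≤ n} d(fⁱ x, fⁱ y)`. -/
def BowenClose (n : ℕ) (r : ℝ) (x y : X) : Prop :=
  ∀ i ∈ Finset.Icc (-(n : ℤ)) n, dist ((f ^ i) x) ((f ^ i) y) < r

variable {f}

lemma BowenClose.symm {n : ℕ} {r : ℝ} {x y : X} (h : BowenClose f n r x y) :
    BowenClose f n r y x := fun i hi => by
  rw [dist_comm]; exact h i hi

lemma BowenClose.trans {n : ℕ} {r s : ℝ} {x y z : X} (h : BowenClose f n r x y)
    (h' : BowenClose f n s y z) : BowenClose f n (r + s) x z := fun i hi =>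
  (dist_triangle _ _ _).trans_lt (add_lt_add (h i hi) (h' i hi))

lemma BowenClose.refl {n : ℕ} {r : ℝ} (hr : 0 < r) (x : X) : BowenClose f n r x x :=
  fun i _ => by simpa using hr

variable (f)

lemma isOpen_bowenClose (n : ℕ) (r : ℝ) (x : X) : IsOpen {y | BowenClose f n r x y} := by
  have : {y | BowenClose f n r x y} =
      ⋂ i ∈ Finset.Icc (-(n : ℤ)) n, {y | dist ((f ^ i) x) ((f ^ i) y) < r} := by
    ext y; simp [BowenClose]
  rw [this]
  exact isOpen_biInter_finset fun i _ =>
    isOpen_lt (continuous_const.dist (f ^ i).continuous) continuous_const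

variable [CompactSpace X]

/-- A finite partition of `X` (the fibres of `g`) into cells of Bowen diameter less than `r`. -/
lemma exists_bowen_cells (n : ℕ) {r : ℝ} (hr : 0 < r) :
    ∃ (t : Finset X) (g : X → t), ∀ x y, g x = g y → BowenClose f n r x y := by
  obtain ⟨t, ht⟩ := isCompact_univ.elim_finite_subcover
    (fun x : X => {y | BowenClose f n (r / 2) x y}) (isOpen_bowenClose f n (r / 2))
    (fun x _ => mem_iUnion.2 ⟨x, BowenClose.refl (half_pos hr) x⟩)
  have hex : ∀ y : X, ∃ x : t, BowenClose f n (r / 2) x.1 y := fun y => by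
    simpa using ht (mem_univ y)
  choose g hg using hex
  refine ⟨t, g, fun x y hxy => ?_⟩
  have h2 := hg y
  rw [← hxy] at h2
  simpa using (hg x).symm.trans h2

/-- A maximal `(d_n, r)`-separated set is finite and `r`-dense for the Bowen metric. -/
lemma exists_bowen_net (n : ℕ) {r : ℝ} (hr : 0 < r) :
    ∃ E : Finset X, (∀ x ∈ E, ∀ y ∈ E, BowenClose f n r x y → x = y) ∧
      ∀ y, ∃ x ∈ E, BowenClose f n r x y := by
  obtain ⟨E, hE⟩ := zorn_subset
    {E : Set X | E.Pairwise fun x y => ¬ BowenClose f n r x y} (fun C hC hchain =>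
      ⟨⋃₀ C, (pairwise_sUnion hchain.directedOn).2 fun s hs => hC hs,
        fun s hs => subset_sUnion_of_mem hs⟩)
  have hsep : ∀ x ∈ E, ∀ y ∈ E, BowenClose f n r x y → x = y := fun x hx y hy h =>
    by_contra fun hne => hE.prop hx hy hne h
  obtain ⟨t, g, hg⟩ := exists_bowen_cells f n hr
  have hfin : E.Finite := Set.Finite.of_finite_image (toFinite (g '' E))
    fun x hx y hy hxy => hsep x hx y hy (hg x y hxy)
  refine ⟨hfin.toFinset, by simpa using hsep, fun y => ?_⟩
  by_contra! hno
  have hno' : ∀ x ∈ E, ¬ BowenClose f n r x y := fun x hx => hno x (by simpa using hx)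
  have hins : (insert y E).Pairwise fun x y => ¬ BowenClose f n r x y :=
    hE.prop.insert fun x hx _ => ⟨fun h => hno' x hx h.symm, hno' x hx⟩
  exact hno' y (hE.le_of_ge hins (subset_insert y E) (mem_insert y E))
    (BowenClose.refl hr y)

variable {f} {c : ℝ}

/-- Expansiveness at a bounded time horizon, by compactness of `X × X`. -/
lemma uniform_expansive
    (hexp : ∀ x y : X, (∀ i : ℤ, dist ((f ^ i) x) ((f ^ i) y) ≤ c) → x = y)
    {r : ℝ} (hr : 0 < r) : ∃ N : ℕ, ∀ x y : X, BowenClose f N c x y → dist x y < r := by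
  by_contra! hno
  let K : ℕ → Set (X × X) := fun N => {p | r ≤ dist p.1 p.2} ∩
    ⋂ i ∈ Finset.Icc (-(N : ℤ)) N, {p | dist ((f ^ i) p.1) ((f ^ i) p.2) ≤ c}
  have hclosed : ∀ N, IsClosed (K N) := fun N =>
    (isClosed_le continuous_const (by fun_prop)).inter
      (isClosed_biInter fun i _ => isClosed_le
        (((f ^ i).continuous.comp continuous_fst).dist ((f ^ i).continuous.comp continuous_snd))
        continuous_const)
  have hne : ∀ N, (K N).Nonempty := fun N => by
    obtain ⟨x, y, h, hd⟩ := hno N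
    exact ⟨(x, y), hd, mem_iInter₂.2 fun i hi => (h i hi).le⟩
  have hanti : ∀ N, K (N + 1) ⊆ K N := fun N p hp => ⟨hp.1, mem_iInter₂.2 fun i hi =>
    mem_iInter₂.1 hp.2 i (by simp only [Finset.mem_Icc] at hi ⊢; push_cast; lia)⟩
  obtain ⟨⟨x, y⟩, hp⟩ := IsCompact.nonempty_iInter_of_sequence_nonempty_isCompact_isClosed
    K hanti hne (hclosed 0).isCompact hclosed
  rw [mem_iInter] at hp
  have hxy : x = y := hexp x y fun i =>
    mem_iInter₂.1 (hp i.natAbs).2 i (by simp only [Finset.mem_Icc]; lia)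
  have hd : r ≤ dist x y := (hp 0).1
  rw [hxy, dist_self] at hd
  linarith

/-- Mañé's theorem: a compact metric space with an expansive homeomorphism has finite covering
dimension. -/
theorem covDimLE_of_expansive (f : X ≃ₜ X) (hc : 0 < c)
    (hexp : ∀ x y : X, (∀ i : ℤ, dist ((f ^ i) x) ((f ^ i) y) ≤ c) → x = y) :
    ∃ d : ℕ, CovDimLE X d := by
  have hr : 0 < c / 2 := half_pos hc
  obtain ⟨N, hN⟩ := uniform_expansive hexp hr
  obtain ⟨t, g, hg⟩ := exists_bowen_cells f N hr
  refine ⟨t.card * t.card, fun m U hU hcov => ?_⟩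
  obtain ⟨δ, hδ, hleb⟩ := lebesgue_number_lemma_of_metric isCompact_univ hU hcov.ge
  obtain ⟨n, hn⟩ := uniform_expansive hexp hδ
  obtain ⟨E, hsep, hdense⟩ := exists_bowen_net f n hr
  let e := E.equivFin.symm
  refine ⟨E.card, fun k => {y | BowenClose f n (c / 2) (e k).1 y},
    fun k => isOpen_bowenClose f n _ _, ?_, fun k => ?_, fun y => ?_⟩
  · refine eq_univ_of_forall fun y => ?_
    obtain ⟨x, hx, hxy⟩ := hdense y
    exact mem_iUnion.2 ⟨e.symm ⟨x, hx⟩, by simpa using hxy⟩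
  · obtain ⟨i, hi⟩ := hleb (e k).1 (mem_univ _)
    refine ⟨i, fun y hy => hi ?_⟩
    rw [Metric.mem_ball']
    exact hn _ _ fun j hj => (hy j hj).trans (half_lt_self hc)
  · refine le_trans ?_ (Nat.le_succ _)
    let G : Fin E.card → t × t := fun k => (g ((f ^ (n : ℤ)) (e k).1), g ((f ^ (-(n : ℤ))) (e k).1))
    have hinj : InjOn G {k | y ∈ {y | BowenClose f n (c / 2) (e k).1 y}} := by
      intro k hk l hl hkl
      obtain ⟨h1, h2⟩ := Prod.ext_iff.1 hkl
      have hcl : BowenClose f n c (e k).1 (e l).1 := by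
        simpa using BowenClose.trans hk (BowenClose.symm hl)
      -- composition law for iterates, used to move the time origin to `i`, `n` and `-n`
      have hadd : ∀ (a b : ℤ) (z : X), (f ^ a) ((f ^ b) z) = (f ^ (a + b)) z := fun a b z => by
        rw [zpow_add]; rfl
      refine e.injective (Subtype.ext (hsep _ (e k).2 _ (e l).2 fun i hi => ?_))
      rw [Finset.mem_Icc] at hi
      by_cases hup : (n : ℤ) < i + N
      · have := hg _ _ h1 (i - n) (by rw [Finset.mem_Icc]; lia)
        rwa [hadd, hadd, sub_add_cancel] at this
      by_cases hlow : i - N < -(n : ℤ)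
      · have := hg _ _ h2 (i + n) (by rw [Finset.mem_Icc]; lia)
        rwa [hadd, hadd, add_neg_cancel_right] at this
      · refine hN _ _ fun j hj => ?_
        rw [Finset.mem_Icc] at hj
        rw [hadd, hadd]
        exact hcl _ (by rw [Finset.mem_Icc]; lia)
    calc _ ≤ (univ : Set (t × t)).ncard :=
          ncard_le_ncard_of_injOn G (fun _ _ => mem_univ _) hinj
      _ = t.card * t.card := by simp [ncard_univ]

end Expansive

/-- if `(X, d, φ)` is a Smale space, then `X` has finite covering
dimension. -/
theorem smale_finite_covering_dimension {X : Type*} [MetricSpace X] [CompactSpace X]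
    (S : SmaleSpace X) : ∃ d : ℕ, CovDimLE X d := by
  obtain ⟨c, hc, hexp⟩ := S.expansive
  exact covDimLE_of_expansive S.phi hc hexp
end

section
/- Let (X,d,φ) be an irreducible Smale space, P a finite φ-invariant set of periodic points, and K ⊆ G_S(P) an open relatively compact subset. Then for any γ with 0 < γ < ε_X/2 there exists N_K ∈ ℕ such that for each n ≥ N_K and each (x,y) ∈ (φⁿ×φⁿ)(K), one has x ∈ X^s(y,γ); in particular d(x,y) < γ for every (x,y) ∈ (φⁿ×φⁿ)(K) with n ≥ N_K. -/
/-!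
On pairs that are uniformly close to the diagonal, the bracket `[x, y]` is uniformly close to both
`x` and `y` (`exists_br_close`, from compactness). Two consequences carry the proof.

If `φⁿ x` and `φⁿ y` stay that close for all `n ≥ 0`, then `[x, y] = y`: the points `y` and `[x, y]`
lie on a common local unstable set, and so do all their forward images, which remain at bounded
distance; since `φ⁻¹` contracts local unstable sets, `y` and `[x, y]` coincide
(`br_eq_right_of_forward_close`). Hence every `(v, w) ∈ G_S(P)` lies in a basic set
`V(v, w, h, δ, N)`, and for `N` large and `δ` small every pair `(h z, z)` of this basic set has
`φᴺ (h z)` on the local stable set of `φᴺ z` (`exists_basic_nhd`).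

On such a basic set the contraction axiom C1 brings `φⁿ (h z)` and `φⁿ z` together at a rate that
depends only on `N` (`mem_Xs_of_stable`). Finitely many of these basic sets cover the compact closure
of `K`, and the largest of the finitely many thresholds serves for all of `K`.
-/

open Filter Topology Set

namespace SmaleSpace

variable {X : Type*} [MetricSpace X] [CompactSpace X] (S : SmaleSpace X)

/-! ### Brackets near the diagonal and local stable sets -/

/-- For pairs close enough to the diagonal, the bracket is at distance `< S.eps` from both entries;
this supplies the proviso "whenever all brackets occurring are defined" of the axioms. -/
lemma exists_br_close : ∃ η > 0, η ≤ S.eps ∧ ∀ x y : X, dist x y < η →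
    dist x (S.br x y) < S.eps ∧ dist y (S.br x y) < S.eps := by
  have hopen : IsOpen {p : X × X | dist p.1 p.2 < S.eps} :=
    isOpen_lt (by fun_prop) continuous_const
  have hU : {p : X × X | dist p.1 (S.br p.1 p.2) < S.eps ∧ dist p.2 (S.br p.1 p.2) < S.eps} ∈
      uniformity X := by
    rw [← nhdsSet_diagonal_eq_uniformity, mem_nhdsSet_iff_forall]
    rintro ⟨x, y⟩ hxy
    obtain rfl : x = y := hxy
    have hc : ContinuousAt (fun p : X × X => S.br p.1 p.2) (x, x) :=
      S.br_continuousOn.continuousAt (hopen.mem_nhds (by simp [S.eps_pos]))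
    have h1 : ContinuousAt (fun p : X × X => dist p.1 (S.br p.1 p.2)) (x, x) :=
      continuousAt_fst.dist hc
    have h2 : ContinuousAt (fun p : X × X => dist p.2 (S.br p.1 p.2)) (x, x) :=
      continuousAt_snd.dist hc
    exact (h1.eventually_lt_const (by simp [S.br_self, S.eps_pos])).and
      (h2.eventually_lt_const (by simp [S.br_self, S.eps_pos]))
  obtain ⟨η, hη, h⟩ := Metric.mem_uniformity_dist.1 hU
  exact ⟨min η S.eps, lt_min hη S.eps_pos, min_le_right _ _,
    fun x y hxy => h (hxy.trans_le (min_le_left _ _))⟩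

lemma iterate_br (x y : X) (n : ℕ)
    (h : ∀ k ≤ n, dist ((⇑S.phi)^[k] x) ((⇑S.phi)^[k] y) < S.eps) :
    (⇑S.phi)^[n] (S.br x y) = S.br ((⇑S.phi)^[n] x) ((⇑S.phi)^[n] y) := by
  induction n with
  | zero => rfl
  | succ n ih =>
    have h1 := h (n + 1) le_rfl
    rw [Function.iterate_succ_apply', Function.iterate_succ_apply'] at h1
    simp only [Function.iterate_succ_apply']
    rw [ih fun k hk => h k (by omega), S.br_b4 _ _ (h n (by omega)) h1]

/-- Local stable equivalence is preserved by `φ`, with geometric contraction. -/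
lemma iterate_stable (x y : X) (hd : dist x y < S.eps) (hb : S.br x y = y) (n : ℕ) :
    dist ((⇑S.phi)^[n] x) ((⇑S.phi)^[n] y) ≤ S.lam ^ n * dist x y ∧
      S.br ((⇑S.phi)^[n] x) ((⇑S.phi)^[n] y) = (⇑S.phi)^[n] y := by
  have hdist : ∀ n, S.lam ^ n * dist x y < S.eps := fun n =>
    (mul_le_of_le_one_left dist_nonneg (pow_le_one₀ S.lam_pos.le S.lam_lt_one.le)).trans_lt hd
  induction n with
  | zero => simpa using hb
  | succ n ih =>
    obtain ⟨h1, h2⟩ := ih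
    have h0 := h1.trans_lt (hdist n)
    have h3 : dist (S.phi ((⇑S.phi)^[n] x)) (S.phi ((⇑S.phi)^[n] y)) ≤
        S.lam ^ (n + 1) * dist x y := by
      refine (S.c1 _ _ h0 h2).trans ?_
      rw [pow_succ', mul_assoc]
      exact mul_le_mul_of_nonneg_left h1 S.lam_pos.le
    simp only [Function.iterate_succ_apply']
    refine ⟨h3, ?_⟩
    rw [← S.br_b4 _ _ h0 (h3.trans_lt (hdist (n + 1))), h2]

/-- Points whose forward orbits stay close lie on a common local stable set. -/
lemma br_eq_right_of_forward_close {η : ℝ} (hη : η ≤ S.eps)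
    (hbr : ∀ x y : X, dist x y < η → dist x (S.br x y) < S.eps ∧ dist y (S.br x y) < S.eps)
    (x y : X) (h : ∀ n : ℕ, dist ((⇑S.phi)^[n] x) ((⇑S.phi)^[n] y) < η) :
    S.br x y = y := by
  have hit : ∀ n, (⇑S.phi)^[n] (S.br x y) = S.br ((⇑S.phi)^[n] x) ((⇑S.phi)^[n] y) :=
    fun n => S.iterate_br x y n fun k _ => (h k).trans_le hη
  have hclose : ∀ n, dist ((⇑S.phi)^[n] y) ((⇑S.phi)^[n] (S.br x y)) < S.eps := fun n => by
    rw [hit]; exact (hbr _ _ (h n)).2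
  have hunst : ∀ n, S.br ((⇑S.phi)^[n] y) ((⇑S.phi)^[n] (S.br x y)) = (⇑S.phi)^[n] y := fun n => by
    have := hclose n
    rw [hit] at this ⊢
    rw [S.br_b2 _ _ _ ((h n).trans_le hη) this (by simp [S.eps_pos]), S.br_self]
  have hstep : ∀ n, dist ((⇑S.phi)^[n] y) ((⇑S.phi)^[n] (S.br x y)) ≤
      S.lam * dist ((⇑S.phi)^[n + 1] y) ((⇑S.phi)^[n + 1] (S.br x y)) := fun n => by
    have := S.c2 _ _ (hclose (n + 1)) (hunst (n + 1))
    simpa only [Function.iterate_succ_apply', Homeomorph.symm_apply_apply] using this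
  have hpow : ∀ n, dist y (S.br x y) ≤
      S.lam ^ n * dist ((⇑S.phi)^[n] y) ((⇑S.phi)^[n] (S.br x y)) := fun n => by
    induction n with
    | zero => simp
    | succ n ih =>
      refine ih.trans ?_
      rw [pow_succ, mul_assoc]
      exact mul_le_mul_of_nonneg_left (hstep n) (pow_nonneg S.lam_pos.le n)
  have hlim : Tendsto (fun n : ℕ => S.lam ^ n * S.eps) atTop (𝓝 0) := by
    simpa using (tendsto_pow_atTop_nhds_zero_of_lt_one S.lam_pos.le S.lam_lt_one).mul_const S.eps
  have h0 : dist y (S.br x y) ≤ 0 := ge_of_tendsto' hlim fun n =>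
    (hpow n).trans (mul_le_mul_of_nonneg_left (hclose n).le (pow_nonneg S.lam_pos.le n))
  exact (dist_le_zero.1 h0).symm

/-! ### Basic sets of the stable groupoid -/

lemma exists_radius (w : X) (N : ℕ) {ρ : ℝ} (hρ : 0 < ρ) :
    ∃ δ > 0, ∀ z, dist w z < δ → ∀ n ≤ N, dist ((⇑S.phi)^[n] w) ((⇑S.phi)^[n] z) < ρ := by
  have h : ∀ᶠ z in 𝓝 w, ∀ n ∈ Set.Iic N, dist ((⇑S.phi)^[n] w) ((⇑S.phi)^[n] z) < ρ := by
    rw [Filter.eventually_all_finite (Set.finite_Iic N)]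
    intro n _
    have hc : Continuous fun z => dist ((⇑S.phi)^[n] w) ((⇑S.phi)^[n] z) :=
      continuous_const.dist (S.phi.continuous.iterate n)
    exact hc.continuousAt.eventually_lt_const (by simpa using hρ)
  obtain ⟨δ, hδ, hd⟩ := Metric.eventually_nhds_iff.1 h
  exact ⟨δ, hδ, fun z hz n hn => hd (by rwa [dist_comm]) n hn⟩

lemma iterate_image_Xu_subset (w : X) (N : ℕ) {δ ρ : ℝ} (hρ : ρ ≤ S.eps)
    (h : ∀ z, dist w z < δ → ∀ n ≤ N, dist ((⇑S.phi)^[n] w) ((⇑S.phi)^[n] z) < ρ) :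
    ∀ n ≤ N, (⇑S.phi)^[n] '' S.Xu w δ ⊆ S.Xu ((⇑S.phi)^[n] w) ρ := by
  rintro n hn _ ⟨z, ⟨hz, hb⟩, rfl⟩
  refine ⟨h z hz n hn, ?_⟩
  rw [← S.iterate_br w z n fun k hk => (h z hz k (hk.trans hn)).trans_le hρ, hb]

lemma iterate_hMap (v : X) (N : ℕ) (z : X) :
    (⇑S.phi)^[N] (S.hMap v N z) = S.br ((⇑S.phi)^[N] z) ((⇑S.phi)^[N] v) :=
  Function.RightInverse.iterate S.phi.apply_symm_apply N _

/-- Every `(v, w)` of the stable groupoid lies in a basic set all of whose pairs are, after applying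
`φᴺ`, on a common local stable set. -/
lemma exists_basic_nhd (P : Set X) (v w : X) (hvw : (v, w) ∈ S.GS P) :
    ∃ δ N, S.IsBasicData P v w δ N ∧ (v, w) ∈ S.basicSet v w δ N ∧
      ∀ q ∈ S.basicSet v w δ N,
        dist ((⇑S.phi)^[N] q.2) ((⇑S.phi)^[N] q.1) < S.eps ∧
        S.br ((⇑S.phi)^[N] q.2) ((⇑S.phi)^[N] q.1) = (⇑S.phi)^[N] q.1 := by
  obtain ⟨η, hη0, hη, hbr⟩ := S.exists_br_close
  -- Both `φᴺ v` and `φᴺ z` are kept within `η / 2` of `φᴺ w`, so that they are `η`-close.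
  obtain ⟨N, hN⟩ := eventually_atTop.1 (hvw.1.eventually_lt_const (half_pos hη0))
  obtain ⟨δ₁, hδ₁, hw⟩ := S.exists_radius w N (half_pos hη0)
  obtain ⟨δ₂, hδ₂, hv⟩ := S.exists_radius v N (half_pos hη0)
  have heps := S.eps_pos
  obtain ⟨δ, hδ0, hδ⟩ := exists_between (lt_min (lt_min hδ₁ hδ₂) (half_pos heps))
  obtain ⟨hδ12, hδe⟩ := lt_min_iff.1 hδ
  obtain ⟨hδ1, hδ2⟩ := lt_min_iff.1 hδ12
  have hXu : ∀ u : X, (∀ z, dist u z < δ → ∀ n ≤ N,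
      dist ((⇑S.phi)^[n] u) ((⇑S.phi)^[n] z) < η / 2) →
      ∀ n ≤ N, (⇑S.phi)^[n] '' S.Xu u δ ⊆ S.Xu ((⇑S.phi)^[n] u) (S.eps / 2) := fun u hu =>
    S.iterate_image_Xu_subset u N (by linarith) fun z hz n hn => by linarith [hu z hz n hn]
  refine ⟨δ, N, ⟨hvw, by linarith [hN N le_rfl], hδ0, hδe,
    hXu w fun z hz => hw z (hz.trans hδ1), hXu v fun z hz => hv z (hz.trans hδ2)⟩, ?_, ?_⟩
  · refine ⟨w, ⟨by simpa using hδ0, S.br_self w⟩, ?_⟩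
    have hb : S.br ((⇑S.phi)^[N] w) ((⇑S.phi)^[N] v) = (⇑S.phi)^[N] v := by
      refine S.br_eq_right_of_forward_close hη hbr _ _ fun n => ?_
      rw [← Function.iterate_add_apply, ← Function.iterate_add_apply, dist_comm]
      linarith [hN (n + N) (by omega)]
    have hv' : v = S.hMap v N w :=
      (S.phi.injective.iterate N) (by rw [iterate_hMap, hb])
    rw [← hv']
  · rintro _ ⟨z, ⟨hz, -⟩, rfl⟩
    simp only [iterate_hMap]
    have hd : dist ((⇑S.phi)^[N] z) ((⇑S.phi)^[N] v) < η := by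
      have h1 := hw z (hz.trans hδ1) N le_rfl
      have h2 := hN N le_rfl
      rw [dist_comm] at h1 h2
      linarith [dist_triangle ((⇑S.phi)^[N] z) ((⇑S.phi)^[N] w) ((⇑S.phi)^[N] v)]
    have h1 := (hbr _ _ hd).1
    exact ⟨h1, S.br_b2 _ _ _ (hd.trans_le hη) h1 (hd.trans_le hη)⟩

/-! ### Uniform contraction and compactness -/

/-- Once `φᴺ x` and `φᴺ y` are on a common local stable set, `φⁿ x ∈ X^s(φⁿ y, γ)` from a time on
that depends only on `N` and `γ`. -/
lemma mem_Xs_of_stable {γ : ℝ} (hγ0 : 0 < γ) (hγ : γ ≤ S.eps) (N : ℕ) :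
    ∃ M, ∀ n ≥ M, ∀ x y : X, dist ((⇑S.phi)^[N] y) ((⇑S.phi)^[N] x) < S.eps →
      S.br ((⇑S.phi)^[N] y) ((⇑S.phi)^[N] x) = (⇑S.phi)^[N] x →
      (⇑S.phi)^[n] x ∈ S.Xs ((⇑S.phi)^[n] y) γ := by
  have hlim : Tendsto (fun n : ℕ => S.lam ^ n * S.eps) atTop (𝓝 0) := by
    simpa using (tendsto_pow_atTop_nhds_zero_of_lt_one S.lam_pos.le S.lam_lt_one).mul_const S.eps
  obtain ⟨k, hk⟩ := eventually_atTop.1 (hlim.eventually_lt_const hγ0)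
  refine ⟨k + N, fun n hn x y hd hb => ?_⟩
  obtain ⟨m, rfl⟩ : ∃ m, n = m + N := ⟨n - N, by omega⟩
  obtain ⟨h1, h2⟩ := S.iterate_stable _ _ hd hb m
  rw [← Function.iterate_add_apply, ← Function.iterate_add_apply] at h1 h2
  have h3 : dist ((⇑S.phi)^[m + N] y) ((⇑S.phi)^[m + N] x) < γ :=
    (h1.trans (mul_le_mul_of_nonneg_left hd.le (pow_nonneg S.lam_pos.le m))).trans_lt
      (hk m (by omega))
  refine ⟨h3, ?_⟩
  -- By B3, `[y', x'] = x'` gives `[x', y'] = [[y', x'], y'] = [y', y'] = y'`.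
  have h4 := S.br_b3 _ _ ((⇑S.phi)^[m + N] y) (h3.trans_le hγ)
    (by rw [h2, dist_comm]; exact h3.trans_le hγ) (by simp [S.eps_pos])
  rwa [h2, S.br_self] at h4

end SmaleSpace

/-- A property that holds locally from some time on holds uniformly from some time on over a
relatively compact set. -/
lemma exists_threshold_of_isCompact_closure {Y : Type*} [TopologicalSpace Y] {s : Set Y}
    (hs : IsCompact (closure s)) (p : ℕ → Y → Prop)
    (h : ∀ y, ∃ U, IsOpen U ∧ y ∈ U ∧ ∃ N, ∀ n ≥ N, ∀ u ∈ U, p n u) :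
    ∃ N, ∀ n ≥ N, ∀ u ∈ s, p n u := by
  have hc : ∃ N, ∀ n ≥ N, ∀ u ∈ closure s, p n u := by
    refine hs.induction_on (p := fun t => ∃ N, ∀ n ≥ N, ∀ u ∈ t, p n u) ⟨0, by simp⟩
      (fun t t' ht ⟨N, hN⟩ => ⟨N, fun n hn u hu => hN n hn u (ht hu)⟩) ?_ ?_
    · rintro t t' ⟨N, hN⟩ ⟨N', hN'⟩
      exact ⟨max N N', fun n hn u hu => hu.elim (hN n ((le_max_left _ _).trans hn) u)
        (hN' n ((le_max_right _ _).trans hn) u)⟩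
    · intro y _
      obtain ⟨U, hU, hy, hN⟩ := h y
      exact ⟨U, mem_nhdsWithin_of_mem_nhds (hU.mem_nhds hy), hN⟩
  obtain ⟨N, hN⟩ := hc
  exact ⟨N, fun n hn u hu => hN n hn u (subset_closure hu)⟩

/-- Lemma `pointAreCloseLemma`: for `0 < γ < ε_X/2` there is `N_K` such
that for any `n ≥ N_K` and `(x, y) ∈ (φⁿ × φⁿ)(K)` we have `x ∈ X^s(y, γ)`; in
particular `d(x, y) < γ`. -/
theorem smale_points_get_close {X : Type*} [MetricSpace X] [CompactSpace X]
    (S : SmaleSpace X) (hIrr : S.Irreducible) (P : Set X) (hPfin : P.Finite)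
    (hPinv : ∀ p ∈ P, S.phi p ∈ P) (hPper : ∀ p ∈ P, S.IsPeriodicPt p)
    (K : Set (X × X)) (hKsub : K ⊆ S.GS P) (hKopen : S.gsOpen P K)
    (hKrc : S.gsRelCompact P K) (γ : ℝ) (hγ0 : 0 < γ) (hγ : γ < S.eps / 2) :
    ∃ NK : ℕ, ∀ n : ℕ, NK ≤ n → ∀ q ∈ S.phiSq n K,
      q.1 ∈ S.Xs q.2 γ ∧ dist q.1 q.2 < γ := by
  obtain ⟨NK, hNK⟩ := @exists_threshold_of_isCompact_closure _ (S.gsTop P) _ hKrc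
    (fun n u => (⇑S.phi)^[n] u.val.1 ∈ S.Xs ((⇑S.phi)^[n] u.val.2) γ) (by
      rintro ⟨⟨v, w⟩, hvw⟩
      obtain ⟨δ, N, hdata, hmem, hst⟩ := S.exists_basic_nhd P v w hvw
      obtain ⟨M, hM⟩ := S.mem_Xs_of_stable hγ0 (by linarith [S.eps_pos]) N
      exact ⟨{q : S.GSPt P | q.val ∈ S.basicSet v w δ N},
        TopologicalSpace.isOpen_generateFrom_of_mem ⟨v, w, δ, N, hdata, rfl⟩, hmem, M,
        fun n hn u hu => hM n hn _ _ (hst _ hu).1 (hst _ hu).2⟩)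
  refine ⟨NK, ?_⟩
  rintro n hn _ ⟨q, hq, rfl⟩
  have h := hNK n hn ⟨q, hKsub hq⟩ hq
  exact ⟨h, by rw [dist_comm]; exact h.1⟩
end

section
/- Let (X,d,φ) be a Smale space with X an infinite compact metric space of covering dimension at most d, and let 0 < γ < ε_X/4. Then there exist finite open covers {U_j}_{j=1}^M and {V_j}_{j=1}^M of X such that: (i) for each j there exists w ∈ X with U_j ⊆ U(w,γ); (ii) every point of X belongs to at most d+1 of the sets U_j; (iii) V_j ⊆ U_j for each j; (iv) for all j₁,j₂, if U_{j₁} ∩ U_{j₂} = ∅ then the closures of V_{j₁} and V_{j₂} are disjoint; (v) there exists γ' with 0 < γ' < γ such that for all j₁,j₂ with U_{j₁} ∩ U_{j₂} = ∅ and all x ∈ V_{j₁}, y ∈ V_{j₂}, one has d(x,y) > γ'. -/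
/-!
Every set `U(w, γ)` is a neighbourhood of `w`: for `u` close to `w`, the points `[u, w]` and
`[w, u]` lie in the local unstable and stable sets of `w`, and `[[u, w], [w, u]] = u` by the
bracket axioms. Compactness gives a finite cover by open sets inside some `U(w, γ)`, and the
dimension hypothesis refines it to a cover `U` of multiplicity at most `d + 1`. A shrinking `V`
of `U`, with `closure (V j) ⊆ U j`, makes the closures of `V j₁` and `V j₂` disjoint whenever
`U j₁` and `U j₂` are; disjoint compact sets are at positive distance, and there are only
finitely many pairs.
-/

open Filter Topology Set

/-- `U(w, γ)` is a neighbourhood of `w`. -/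
theorem SmaleSpace.Uset_mem_nhds {X : Type*} [MetricSpace X] [CompactSpace X]
    (S : SmaleSpace X) (w : X) {γ : ℝ} (hγ : 0 < γ) : S.Uset w γ ∈ 𝓝 w := by
  have hbr : ContinuousAt (fun p : X × X => S.br p.1 p.2) (w, w) :=
    S.br_continuousOn.continuousAt ((isOpen_lt (by fun_prop) (by fun_prop)).mem_nhds
      (by simpa using S.eps_pos))
  have h1 : Tendsto (fun u => S.br u w) (𝓝 w) (𝓝 w) := by
    have h : Tendsto (fun u => S.br u w) (𝓝 w) (𝓝 (S.br w w)) :=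
      hbr.tendsto.comp ((continuous_id.prodMk continuous_const).tendsto' w (w, w) rfl)
    rwa [S.br_self] at h
  have h2 : Tendsto (fun u => S.br w u) (𝓝 w) (𝓝 w) := by
    have h : Tendsto (fun u => S.br w u) (𝓝 w) (𝓝 (S.br w w)) :=
      hbr.tendsto.comp ((continuous_const.prodMk continuous_id).tendsto' w (w, w) rfl)
    rwa [S.br_self] at h
  have h0 : Tendsto (fun u : X => u) (𝓝 w) (𝓝 w) := tendsto_id
  have hc : Tendsto (fun _ : X => w) (𝓝 w) (𝓝 w) := tendsto_const_nhds
  have key : ∀ {f g : X → X} {r : ℝ}, 0 < r → Tendsto f (𝓝 w) (𝓝 w) →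
      Tendsto g (𝓝 w) (𝓝 w) → ∀ᶠ u in 𝓝 w, dist (f u) (g u) < r := by
    intro f g r hr hf hg
    have h := hf.dist hg
    rw [dist_self] at h
    exact h.eventually_lt_const hr
  have he := S.eps_pos
  filter_upwards [key he h0 hc, key he hc h1, key he h2 hc, key he h1 h2, key he h0 h2,
    key hγ hc h1, key hγ hc h2] with u a1 a2 a3 a4 a5 a6 a7
  have a1' : dist w u < S.eps := by rwa [dist_comm]
  have a0 : ∀ x : X, dist x x < S.eps := fun x => by simpa using he
  refine ⟨S.br u w, ⟨a6, ?_⟩, S.br w u, ⟨a7, ?_⟩, ?_⟩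
  · rw [S.br_b2 w u w a1 a2 (a0 w), S.br_self]
  · rw [S.br_b3 w u w a1' a3 (a0 w), S.br_self]
  · rw [S.br_b3 u w _ a1 a4 a5, S.br_b2 u w u a1' a5 (a0 u), S.br_self]

/-- Lemma `spaced cover`: for a Smale space on an infinite compact
metric space of covering dimension at most `d` and `0 < γ < ε_X/4`, there are finite
open covers `{U_j}` and `{V_j}` of `X` satisfying properties (i)--(v). -/
theorem smale_spaced_cover {X : Type*} [MetricSpace X] [CompactSpace X] [Infinite X]
    (S : SmaleSpace X) (d : ℕ) (hdim : CovDimLE X d)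
    (γ : ℝ) (hγ0 : 0 < γ) (hγ : γ < S.eps / 4) :
    ∃ (M : ℕ) (U V : Fin M → Set X),
      (∀ j, IsOpen (U j)) ∧ (⋃ j, U j) = Set.univ ∧
      (∀ j, IsOpen (V j)) ∧ (⋃ j, V j) = Set.univ ∧
      (∀ j, ∃ w : X, U j ⊆ S.Uset w γ) ∧
      (∀ x : X, Set.ncard {j | x ∈ U j} ≤ d + 1) ∧
      (∀ j, V j ⊆ U j) ∧
      (∀ j1 j2, U j1 ∩ U j2 = ∅ → closure (V j1) ∩ closure (V j2) = ∅) ∧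
      ∃ γ' : ℝ, 0 < γ' ∧ γ' < γ ∧ ∀ j1 j2, U j1 ∩ U j2 = ∅ →
        ∀ x ∈ V j1, ∀ y ∈ V j2, γ' < dist x y := by
  choose N hNsub hNo hNw using fun w => mem_nhds_iff.1 (S.Uset_mem_nhds w hγ0)
  obtain ⟨t, ht⟩ := isCompact_univ.elim_finite_subcover N hNo
    (fun x _ => mem_iUnion.2 ⟨x, hNw x⟩)
  let e := t.equivFin.symm
  obtain ⟨M, U, hUo, hUc, hUN, hUd⟩ := hdim t.card (fun i => N (e i)) (fun i => hNo _) (by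
    refine eq_univ_of_forall fun x => ?_
    obtain ⟨w, hw, hx⟩ := mem_iUnion₂.1 (ht (mem_univ x))
    exact mem_iUnion.2 ⟨e.symm ⟨w, hw⟩, by simpa using hx⟩)
  obtain ⟨V, hVc, hVo, hVU⟩ := exists_iUnion_eq_closure_subset hUo
    (fun x => Set.toFinite _) hUc
  have hdisj : ∀ j1 j2, U j1 ∩ U j2 = ∅ → closure (V j1) ∩ closure (V j2) = ∅ :=
    fun j1 j2 h => subset_empty_iff.1 (h ▸ inter_subset_inter (hVU j1) (hVU j2))
  have hsep : ∀ᶠ r : ℝ in 𝓝[>] 0, ∀ j1 j2, U j1 ∩ U j2 = ∅ →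
      ∀ x ∈ V j1, ∀ y ∈ V j2, r < dist x y := by
    refine eventually_all.2 fun j1 => eventually_all.2 fun j2 => ?_
    by_cases h : U j1 ∩ U j2 = ∅
    · obtain ⟨r, hr, hlt⟩ := Metric.exists_pos_forall_lt_edist
        (isClosed_closure (s := V j1)).isCompact (isClosed_closure (s := V j2))
        (disjoint_iff_inter_eq_empty.2 (hdisj j1 j2 h))
      filter_upwards [Ioo_mem_nhdsGT (NNReal.coe_pos.2 hr)] with s hs _ x hx y hy
      have hxy := hlt x (subset_closure hx) y (subset_closure hy)
      rw [edist_nndist, ENNReal.coe_lt_coe] at hxy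
      exact hs.2.trans (by exact_mod_cast hxy)
    · exact Eventually.of_forall fun r h' => absurd h' h
  obtain ⟨γ', hγ', hpos⟩ := (hsep.and (Ioo_mem_nhdsGT hγ0)).exists
  refine ⟨M, U, V, hUo, hUc, hVo, hVc, fun j => ?_, hUd,
    fun j => subset_closure.trans (hVU j), hdisj, γ', hpos.1, hpos.2, hγ'⟩
  obtain ⟨i, hi⟩ := hUN j
  exact ⟨e i, hi.trans (hNsub _)⟩
end
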